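/- Let (X,d) be a metric space, and let α : [0,∞) → [1,∞) and β : [0,∞) → [0,1) be such that β has property (MT) and there is a bounded function γ : (0,1] → [0,∞) with lim_{s→0⁺} γ(s) = 0 such that p(s) = s − (1−s)·γ(s) is essentially positive on (0,1] and α(t) ≤ 1 + γ(1−β(t)) for all t ≥ 0. Let F map X into nonempty closed subsets of X and let (x_n) be a sequence with x_{n+1} ∈ F(x_n) satisfying, with d_n = d(x_n,x_{n+1}): d_n ≤ α(d_n)·d_F(x_n) and d_F(x_{n+1}) ≤ β(d_n)·d_n for all n. Then (x_n) is a Cauchy sequence in X. -/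

import Mathlib

/-!
Write `dₙ = d(xₙ, xₙ₊₁)` and `eₙ = dist(xₙ, F(xₙ))`. The two approximation conditions combine to
`eₙ₊₁ ≤ (1 - p(1 - β(dₙ))) eₙ`, so `eₙ` decreases to some `L ≥ 0`. It remains to keep `1 - β(dₙ)`
away from `0`: where it is small, `γ(1 - β(dₙ))` is small too, so `dₙ ≤ (1 + γ(1 - β(dₙ))) eₙ` is
squeezed into a right neighbourhood of `L`, on which property (MT) bounds `β` away from `1`.
Hence `eₙ` decays geometrically, and `dₙ` is summable because `γ` is bounded.
-/

open Filter Set Topology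

/-- Property (MT) of a function on `[0, ∞)`, extended arbitrarily to `ℝ`. The real `limsup` is
meaningful only for functions bounded near the point, such as those with values in `[0, 1)`. -/
def PropertyMT (k : ℝ → ℝ) : Prop :=
  ∀ t, 0 ≤ t → limsup k (𝓝[>] t) < 1

/-- Essential positivity of `h` on a set `S` of positive reals. A positive lower bound on
`{s ∈ S | a ≤ s}` replaces the positive infimum, so that the set may be empty. -/
def EssentiallyPositiveOn (h : ℝ → ℝ) (S : Set ℝ) : Prop :=
  ∀ a > 0, ∃ m > 0, ∀ s ∈ S, a ≤ s → m ≤ h s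

/-- The function `p(s) = s - (1 - s) γ(s)`. At `s = 1 - b` it is the amount by which the factor
`b (1 + γ(1 - b))` of one step of the iteration falls short of `1`. -/
def contractionDefect (γ : ℝ → ℝ) (s : ℝ) : ℝ :=
  s - (1 - s) * γ s

/-- The scalar inequalities satisfied by the step lengths `d n = d(xₙ, xₙ₊₁)` and the distances
`e n = dist(xₙ, F(xₙ))` of an approximating sequence, with `α` replaced by its bound
`1 + γ(1 - β)`. -/
structure IsApproximatingPair (β γ : ℝ → ℝ) (d e : ℕ → ℝ) : Prop where
  nonneg : ∀ n, 0 ≤ e n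
  le : ∀ n, e n ≤ d n
  le_one_add_mul : ∀ n, d n ≤ (1 + γ (1 - β (d n))) * e n
  succ_le : ∀ n, e (n + 1) ≤ β (d n) * d n

theorem EssentiallyPositiveOn.pos {h : ℝ → ℝ} {S : Set ℝ} (hh : EssentiallyPositiveOn h S)
    {s : ℝ} (hs : s ∈ S) (hs0 : 0 < s) : 0 < h s := by
  obtain ⟨m, hm, hmh⟩ := hh s hs0
  exact hm.trans_le (hmh s hs le_rfl)

theorem exists_lt_eventually_nhdsGE_lt_of_limsup_nhdsGT_lt {T R : Type*} [TopologicalSpace T]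
    [PartialOrder T] [ConditionallyCompleteLinearOrder R] [DenselyOrdered R] {f : T → R} {t : T}
    {c : R} (hf : f t < c) (hlimsup : limsup f (𝓝[>] t) < c)
    (hbdd : (𝓝[>] t).IsBoundedUnder (· ≤ ·) f) : ∃ q < c, ∀ᶠ s in 𝓝[≥] t, f s < q := by
  obtain ⟨q, hq, hqc⟩ := exists_between (max_lt hf hlimsup)
  refine ⟨q, hqc, ?_⟩
  rw [← Ioi_insert, nhdsWithin_insert, eventually_sup, eventually_pure]
  exact ⟨(le_max_left _ _).trans_lt hq,
    eventually_lt_of_limsup_lt ((le_max_right _ _).trans_lt hq) hbdd⟩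

theorem PropertyMT.exists_lt_one_eventually_nhdsGE_lt {k : ℝ → ℝ} (hMT : PropertyMT k)
    (hk : ∀ t, 0 ≤ t → k t < 1) {t : ℝ} (ht : 0 ≤ t) : ∃ q < 1, ∀ᶠ s in 𝓝[≥] t, k s < q := by
  refine exists_lt_eventually_nhdsGE_lt_of_limsup_nhdsGT_lt (hk t ht) (hMT t ht)
    (isBoundedUnder_of_eventually_le (a := 1) ?_)
  filter_upwards [self_mem_nhdsWithin] with s hs
  exact (hk s (ht.trans (mem_Ioi.1 hs).le)).le

theorem exists_pos_eventually_le_of_le_one_add_mul {ι : Type*} {l : Filter ι} {σ γ : ℝ → ℝ}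
    {d e : ι → ℝ} {L a : ℝ} (ha : 0 < a) (hσ : ∀ᶠ t in 𝓝[≥] L, a ≤ σ t)
    (hγ : Tendsto γ (𝓝[>] 0) (𝓝 0)) (he : Tendsto e l (𝓝 L)) (hLd : ∀ i, L ≤ d i)
    (hσd : ∀ i, 0 < σ (d i)) (hde : ∀ i, d i ≤ (1 + γ (σ (d i))) * e i) :
    ∃ c > 0, ∀ᶠ i in l, c ≤ σ (d i) := by
  obtain ⟨u, hLu, hu⟩ := mem_nhdsGE_iff_exists_Ico_subset.1 hσ
  have hlim : Tendsto (fun z : ℝ × ℝ ↦ (1 + γ z.1) * z.2) (𝓝[>] 0 ×ˢ 𝓝 L) (𝓝 L) := by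
    simpa using ((hγ.comp tendsto_fst).const_add 1).mul tendsto_snd
  obtain ⟨P, hP, Q, hQ, hPQ⟩ := eventually_prod_iff.1 (hlim.eventually (gt_mem_nhds hLu))
  obtain ⟨c, hc, hcP⟩ := mem_nhdsGT_iff_exists_Ioo_subset.1 hP
  refine ⟨min c a, lt_min hc ha, ?_⟩
  filter_upwards [he.eventually hQ] with i hi
  by_contra! hsmall
  have hdu : d i < u :=
    (hde i).trans_lt (hPQ (hcP ⟨hσd i, hsmall.trans_le (min_le_left _ _)⟩) hi)
  have haσ : a ≤ σ (d i) := hu ⟨hLd i, hdu⟩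
  exact (hsmall.trans_le (min_le_right _ _)).not_ge haσ

namespace IsApproximatingPair

variable {β γ : ℝ → ℝ} {d e : ℕ → ℝ}

theorem nonneg_left (h : IsApproximatingPair β γ d e) (n : ℕ) : 0 ≤ d n :=
  (h.nonneg n).trans (h.le n)

theorem one_sub_mem_Ioc (h : IsApproximatingPair β γ d e)
    (hβ : ∀ t, 0 ≤ t → β t ∈ Ico (0 : ℝ) 1) (n : ℕ) : 1 - β (d n) ∈ Ioc (0 : ℝ) 1 := by
  obtain ⟨hβ0, hβ1⟩ := hβ (d n) (h.nonneg_left n)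
  exact ⟨sub_pos.2 hβ1, sub_le_self 1 hβ0⟩

theorem succ_le_one_sub_contractionDefect_mul (h : IsApproximatingPair β γ d e)
    (hβ : ∀ t, 0 ≤ t → 0 ≤ β t) (n : ℕ) :
    e (n + 1) ≤ (1 - contractionDefect γ (1 - β (d n))) * e n :=
  calc
    e (n + 1) ≤ β (d n) * d n := h.succ_le n
    _ ≤ β (d n) * ((1 + γ (1 - β (d n))) * e n) :=
      mul_le_mul_of_nonneg_left (h.le_one_add_mul n) (hβ _ (h.nonneg_left n))
    _ = (1 - contractionDefect γ (1 - β (d n))) * e n := by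
      rw [contractionDefect]
      ring

theorem antitone (h : IsApproximatingPair β γ d e) (hβ : ∀ t, 0 ≤ t → β t ∈ Ico (0 : ℝ) 1)
    (hp : EssentiallyPositiveOn (contractionDefect γ) (Ioc 0 1)) : Antitone e := by
  refine antitone_nat_of_succ_le fun n ↦ ?_
  have hs := h.one_sub_mem_Ioc hβ n
  exact (h.succ_le_one_sub_contractionDefect_mul (fun t ht ↦ (hβ t ht).1) n).trans
    (mul_le_of_le_one_left (h.nonneg n) (sub_le_self 1 (hp.pos hs hs.1).le))

theorem exists_pos_eventually_le_one_sub (h : IsApproximatingPair β γ d e)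
    (hβ : ∀ t, 0 ≤ t → β t ∈ Ico (0 : ℝ) 1) (hMT : PropertyMT β)
    (hγ : Tendsto γ (𝓝[>] 0) (𝓝 0)) (he : Antitone e) :
    ∃ c > 0, ∀ᶠ n in atTop, c ≤ 1 - β (d n) := by
  have hbdd : BddBelow (range e) := ⟨0, forall_mem_range.2 h.nonneg⟩
  obtain ⟨q, hq, hβq⟩ := hMT.exists_lt_one_eventually_nhdsGE_lt (fun t ht ↦ (hβ t ht).2)
    (le_ciInf h.nonneg)
  exact exists_pos_eventually_le_of_le_one_add_mul (σ := fun t ↦ 1 - β t) (sub_pos.2 hq)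
    (hβq.mono fun t ht ↦ sub_le_sub_left ht.le 1) hγ (tendsto_atTop_ciInf he hbdd)
    (fun n ↦ (ciInf_le hbdd n).trans (h.le n)) (fun n ↦ (h.one_sub_mem_Ioc hβ n).1)
    h.le_one_add_mul

theorem summable_right (h : IsApproximatingPair β γ d e)
    (hβ : ∀ t, 0 ≤ t → β t ∈ Ico (0 : ℝ) 1) (hMT : PropertyMT β)
    (hγ : Tendsto γ (𝓝[>] 0) (𝓝 0))
    (hp : EssentiallyPositiveOn (contractionDefect γ) (Ioc 0 1)) : Summable e := by
  obtain ⟨c, hc, hcβ⟩ := h.exists_pos_eventually_le_one_sub hβ hMT hγ (h.antitone hβ hp)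
  obtain ⟨m, hm, hmp⟩ := hp c hc
  refine summable_of_ratio_norm_eventually_le (sub_lt_self 1 hm) ?_
  filter_upwards [hcβ] with n hn
  rw [Real.norm_of_nonneg (h.nonneg _), Real.norm_of_nonneg (h.nonneg _)]
  exact (h.succ_le_one_sub_contractionDefect_mul (fun t ht ↦ (hβ t ht).1) n).trans
    (mul_le_mul_of_nonneg_right (sub_le_sub_left (hmp _ (h.one_sub_mem_Ioc hβ n) hn) 1)
      (h.nonneg n))

theorem summable_left (h : IsApproximatingPair β γ d e)
    (hβ : ∀ t, 0 ≤ t → β t ∈ Ico (0 : ℝ) 1) {M : ℝ} (hM : ∀ s ∈ Ioc (0 : ℝ) 1, γ s ≤ M)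
    (he : Summable e) : Summable d :=
  Summable.of_nonneg_of_le h.nonneg_left
    (fun n ↦ (h.le_one_add_mul n).trans (mul_le_mul_of_nonneg_right
      (add_le_add_right (hM _ (h.one_sub_mem_Ioc hβ n)) 1) (h.nonneg n)))
    (he.mul_left (1 + M))

end IsApproximatingPair

theorem isApproximatingPair_dist_infDist {X : Type*} [PseudoMetricSpace X] {α β γ : ℝ → ℝ}
    (hαγ : ∀ t, 0 ≤ t → α t ≤ 1 + γ (1 - β t)) {F : X → Set X} {x : ℕ → X}
    (horbit : ∀ n, x (n + 1) ∈ F (x n))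
    (hA : ∀ n, dist (x n) (x (n + 1)) ≤
      α (dist (x n) (x (n + 1))) * Metric.infDist (x n) (F (x n)))
    (hB : ∀ n, Metric.infDist (x (n + 1)) (F (x (n + 1))) ≤
      β (dist (x n) (x (n + 1))) * dist (x n) (x (n + 1))) :
    IsApproximatingPair β γ (fun n ↦ dist (x n) (x (n + 1)))
      (fun n ↦ Metric.infDist (x n) (F (x n))) where
  nonneg _ := Metric.infDist_nonneg
  le n := Metric.infDist_le_dist_of_mem (horbit n)
  le_one_add_mul n :=
    (hA n).trans (mul_le_mul_of_nonneg_right (hαγ _ dist_nonneg) Metric.infDist_nonneg)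
  succ_le := hB

theorem approximating_sequence_is_cauchy_general {X : Type*} [PseudoMetricSpace X]
    {α β γ : ℝ → ℝ} (hβ : ∀ t, 0 ≤ t → β t ∈ Ico (0 : ℝ) 1) (hMT : PropertyMT β)
    (hγbdd : ∃ M : ℝ, ∀ s ∈ Ioc (0 : ℝ) 1, γ s ≤ M)
    (hγlim : Tendsto γ (𝓝[Ioc 0 1] 0) (𝓝 0))
    (hp : EssentiallyPositiveOn (contractionDefect γ) (Ioc 0 1))
    (hαγ : ∀ t, 0 ≤ t → α t ≤ 1 + γ (1 - β t)) {F : X → Set X} {x : ℕ → X}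
    (horbit : ∀ n, x (n + 1) ∈ F (x n))
    (hA : ∀ n, dist (x n) (x (n + 1)) ≤
      α (dist (x n) (x (n + 1))) * Metric.infDist (x n) (F (x n)))
    (hB : ∀ n, Metric.infDist (x (n + 1)) (F (x (n + 1))) ≤
      β (dist (x n) (x (n + 1))) * dist (x n) (x (n + 1))) :
    CauchySeq x := by
  obtain ⟨M, hM⟩ := hγbdd
  rw [nhdsWithin_Ioc_eq_nhdsGT zero_lt_one] at hγlim
  have hpair := isApproximatingPair_dist_infDist hαγ horbit hA hB
  have hsum := hpair.summable_right hβ hMT hγlim hp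
  exact cauchySeq_of_summable_dist (hpair.summable_left hβ hM hsum)

/-- **Lemma 2.5.** For a sequence as in Lemma 2.3 (under the hypotheses of
Theorem 1.4), the sequence `(xₙ)` is a Cauchy (fundamental) sequence. -/
theorem approximating_sequence_is_cauchy
    {X : Type*} [MetricSpace X]
    (α β : ℝ → ℝ)
    (hα : ∀ t, 0 ≤ t → 1 ≤ α t)
    (hβ : ∀ t, 0 ≤ t → β t ∈ Set.Ico (0 : ℝ) 1)
    -- β has property (MT)
    (hMT : ∀ t, 0 ≤ t → Filter.limsup β (nhdsWithin t (Set.Ioi t)) < 1)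
    -- the control function γ
    (γ : ℝ → ℝ)
    (hγnonneg : ∀ s ∈ Set.Ioc (0 : ℝ) 1, 0 ≤ γ s)
    (hγbdd : ∃ M : ℝ, ∀ s ∈ Set.Ioc (0 : ℝ) 1, γ s ≤ M)
    (hγlim : Filter.Tendsto γ (nhdsWithin 0 (Set.Ioc (0 : ℝ) 1)) (nhds 0))
    -- p(s) = s - (1-s)γ(s) is essentially positive on (0,1]
    (hp : ∀ a > (0 : ℝ), ∃ m > (0 : ℝ), ∀ s ∈ Set.Ioc (0 : ℝ) 1, a ≤ s →
      m ≤ s - (1 - s) * γ s)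
    (hαγ : ∀ t, 0 ≤ t → α t ≤ 1 + γ (1 - β t))
    (F : X → Set X)
    (hFne : ∀ x, (F x).Nonempty) (hFcl : ∀ x, IsClosed (F x))
    (x : ℕ → X)
    (horbit : ∀ n : ℕ, x (n + 1) ∈ F (x n))
    (hA : ∀ n : ℕ, dist (x n) (x (n + 1)) ≤
      α (dist (x n) (x (n + 1))) * Metric.infDist (x n) (F (x n)))
    (hB : ∀ n : ℕ, Metric.infDist (x (n + 1)) (F (x (n + 1))) ≤
      β (dist (x n) (x (n + 1))) * dist (x n) (x (n + 1))) :
    CauchySeq x := by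
  exact approximating_sequence_is_cauchy_general hβ hMT hγbdd hγlim hp hαγ horbit hA hB
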